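/- Let (Ω, A, P) be a probability space, X, Y : Ω → ℝ^d integrable random vectors, and Z : Ω → S a random element in a measurable space S. Then X | Z ≤cx Y | Z if and only if X and Y admit a Z-conditional coupling (X̂, Ŷ, Ẑ) such that X̂ = E(Ŷ | σ(X̂, Ẑ)) almost surely. -/

import Mathlib

open MeasureTheory ProbabilityTheory Filter

noncomputable section

abbrev Euc (d : ℕ) : Type := EuclideanSpace ℝ (Fin d)

def FiniteFirstMoment {d : ℕ} (μ : Measure (Euc d)) : Prop :=
  Integrable (fun x => x) μ

def ConvexOrder {d : ℕ} (μ ν : Measure (Euc d)) : Prop :=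
  ∀ φ : Euc d → ℝ, ConvexOn ℝ Set.univ φ → Integrable φ μ → Integrable φ ν →
    ∫ x, φ x ∂μ ≤ ∫ x, φ x ∂ν

def CoordMono {d : ℕ} (φ : Euc d → ℝ) : Prop :=
  ∀ x y : Euc d, (∀ i, x i ≤ y i) → φ x ≤ φ y

def IncConvexOrder {d : ℕ} (μ ν : Measure (Euc d)) : Prop :=
  ∀ φ : Euc d → ℝ, ConvexOn ℝ Set.univ φ → CoordMono φ → Integrable φ μ → Integrable φ ν →
    ∫ x, φ x ∂μ ≤ ∫ x, φ x ∂ν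

def IsCoupling {d : ℕ} (lam : Measure (Euc d × Euc d)) (μ ν : Measure (Euc d)) : Prop :=
  lam.map Prod.fst = μ ∧ lam.map Prod.snd = ν

def fstSigma (d : ℕ) : MeasurableSpace (Euc d × Euc d) :=
  MeasurableSpace.comap Prod.fst inferInstance

def IsMartingaleCoupling {d : ℕ} (lam : Measure (Euc d × Euc d)) : Prop :=
  lam[(fun p : Euc d × Euc d => p.2) | fstSigma d] =ᵐ[lam] (fun p => p.1)

def IsSubmartingaleCoupling {d : ℕ} (lam : Measure (Euc d × Euc d)) : Prop :=
  ∀ᵐ p ∂lam, ∀ i, p.1 i ≤ (lam[(fun q : Euc d × Euc d => q.2) | fstSigma d]) p i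
def CondCXLe {d : ℕ} {Ω : Type} {mΩ : MeasurableSpace Ω} (P : Measure Ω)
    (m : MeasurableSpace Ω) (X Y : Ω → Euc d) : Prop :=
  ∀ φ : Euc d → ℝ, ConvexOn ℝ Set.univ φ →
    Integrable (fun ω => φ (X ω)) P → Integrable (fun ω => φ (Y ω)) P →
    P[(fun ω => φ (X ω)) | m] ≤ᵐ[P] P[(fun ω => φ (Y ω)) | m]

def CondICXLe {d : ℕ} {Ω : Type} {mΩ : MeasurableSpace Ω} (P : Measure Ω)
    (m : MeasurableSpace Ω) (X Y : Ω → Euc d) : Prop :=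
  ∀ φ : Euc d → ℝ, ConvexOn ℝ Set.univ φ → CoordMono φ →
    Integrable (fun ω => φ (X ω)) P → Integrable (fun ω => φ (Y ω)) P →
    P[(fun ω => φ (X ω)) | m] ≤ᵐ[P] P[(fun ω => φ (Y ω)) | m]

set_option linter.unusedSectionVars false

lemma exists_argmax {V I : Type*} [MeasurableSpace V] [Fintype I] [Nonempty I] [MeasurableSpace I]
    (g : I → V → ℝ) (hg : ∀ i, Measurable (g i)) :
    ∃ j : V → I, Measurable j ∧ ∀ y i, g i y ≤ g (j y) y := by
  classical
  have key : ∀ s : Finset I, s.Nonempty → ∃ j : V → I, Measurable j ∧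
      Measurable (fun y => g (j y) y) ∧ ∀ y, ∀ i ∈ s, g i y ≤ g (j y) y := by
    intro s hs
    induction hs using Finset.Nonempty.cons_induction with
    | singleton a => exact ⟨fun _ => a, measurable_const, hg a, by simp⟩
    | cons a s ha hs ih =>
      obtain ⟨j, hj, hjm, hle⟩ := ih
      have hset : MeasurableSet {y | g (j y) y ≤ g a y} := measurableSet_le hjm (hg a)
      refine ⟨fun y => if g (j y) y ≤ g a y then a else j y,
        Measurable.ite hset measurable_const hj, ?_, ?_⟩
      · have : (fun y => g (if g (j y) y ≤ g a y then a else j y) y)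
            = fun y => if g (j y) y ≤ g a y then g a y else g (j y) y := by
          funext y; split_ifs <;> rfl
        rw [this]
        exact Measurable.ite hset (hg a) hjm
      · intro y i hi
        rw [Finset.mem_cons] at hi
        rcases hi with rfl | hi
        · dsimp only; split_ifs with h
          · exact le_rfl
          · exact (not_le.mp h).le
        · dsimp only; split_ifs with h
          · exact (hle y i hi).trans h
          · exact hle y i hi
  obtain ⟨j, hj, _, hle⟩ := key Finset.univ Finset.univ_nonempty
  exact ⟨j, hj, fun y i => hle y i (Finset.mem_univ i)⟩

section
variable {V : Type*} [NormedAddCommGroup V] [NormedSpace ℝ V] [FiniteDimensional ℝ V]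
  [MeasurableSpace V] [BorelSpace V]

def LipCX (μ ν : Measure V) : Prop :=
  ∀ φ : V → ℝ, ConvexOn ℝ Set.univ φ → (∃ K, LipschitzWith K φ) → ∫ x, φ x ∂μ ≤ ∫ x, φ x ∂ν

open Classical in
def emb {I : Type*} [Fintype I] (p : I × V) : I → ℝ × V := Pi.single p.1 (1, p.2)

lemma emb_same {I : Type*} [Fintype I] (p : I × V) : emb p p.1 = (1, p.2) := by
  classical
  rw [emb, Pi.single_eq_same]

lemma emb_ne {I : Type*} [Fintype I] (p : I × V) (b : I) (h : b ≠ p.1) : emb p b = 0 := by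
  classical
  rw [emb, Pi.single_eq_of_ne h]

lemma norm_emb_le {I : Type*} [Fintype I] (p : I × V) : ‖emb p‖ ≤ 1 + ‖p.2‖ := by
  classical
  rw [emb, pi_norm_le_iff_of_nonneg (by positivity)]
  intro i
  by_cases h : i = p.1
  · subst h
    rw [Pi.single_eq_same]
    simp [Prod.norm_def]
  · rw [Pi.single_eq_of_ne h]; simp; positivity

lemma measurable_emb {I : Type*} [Fintype I] [MeasurableSpace I] [MeasurableSingletonClass I] :
    Measurable (emb : I × V → I → ℝ × V) := by
  classical
  refine measurable_pi_iff.2 fun i => ?_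
  have : (fun p : I × V => emb p i) = fun p => if p.1 = i then (1, p.2) else 0 := by
    funext p
    unfold emb
    by_cases h : p.1 = i
    · subst h; simp
    · rw [Pi.single_eq_of_ne (Ne.symm h)]; simp [h]
  rw [this]
  exact Measurable.ite (measurable_fst (measurableSet_singleton i)) (by fun_prop) measurable_const

lemma integrable_emb {I : Type*} [Fintype I] [MeasurableSpace I] [MeasurableSingletonClass I]
    (lam : Measure (I × V)) [IsProbabilityMeasure lam] (h : Integrable (fun p : I × V => p.2) lam) :
    Integrable (emb : I × V → I → ℝ × V) lam := by
  have : SecondCountableTopology V := by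
    have := FiniteDimensional.proper ℝ V
    infer_instance
  refine Integrable.mono' (g := fun p => 1 + ‖p.2‖) ((integrable_const _).add h.norm)
    measurable_emb.aestronglyMeasurable ?_
  exact Eventually.of_forall norm_emb_le

lemma approx1 {I : Type*} [Fintype I] [Nonempty I] [MeasurableSpace I] [MeasurableSingletonClass I]
    (s : V → I) (hs : Measurable s) (μ ν : Measure V) [IsProbabilityMeasure μ]
    [IsProbabilityMeasure ν] (hμ : Integrable (fun x => x) μ) (hν : Integrable (fun x => x) ν)
    (H : LipCX μ ν) (ε : ℝ) (hε : 0 < ε) :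
    ∃ lam : Measure (I × V), IsProbabilityMeasure lam ∧ lam.map Prod.snd = ν ∧
      ‖∫ p, emb p ∂lam - ∫ x, emb (s x, x) ∂μ‖ < ε := by
  classical
  have : SecondCountableTopology V := by
    have := FiniteDimensional.proper ℝ V
    infer_instance
  set C : Set (I → ℝ × V) := {c | ∃ lam : Measure (I × V), IsProbabilityMeasure lam ∧
    lam.map Prod.snd = ν ∧ ∫ p, emb p ∂lam = c} with hC
  have hint : ∀ lam : Measure (I × V), IsProbabilityMeasure lam → lam.map Prod.snd = ν →
      Integrable (emb : I × V → I → ℝ × V) lam := by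
    intro lam hl h
    apply integrable_emb
    rw [← h] at hν
    exact hν.comp_measurable measurable_snd
  have hCconv : Convex ℝ C := by
    rintro c ⟨l1, h1, h1', rfl⟩ c' ⟨l2, h2, h2', rfl⟩ a b ha hb hab
    have hab' : ENNReal.ofReal a + ENNReal.ofReal b = 1 := by
      rw [← ENNReal.ofReal_add ha hb, hab, ENNReal.ofReal_one]
    refine ⟨ENNReal.ofReal a • l1 + ENNReal.ofReal b • l2, ⟨?_⟩, ?_, ?_⟩
    · simp [hab']
    · rw [Measure.map_add _ _ measurable_snd, Measure.map_smul, Measure.map_smul, h1', h2',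
        ← add_smul, hab', one_smul]
    · rw [integral_add_measure, integral_smul_measure, integral_smul_measure,
        ENNReal.toReal_ofReal ha, ENNReal.toReal_ofReal hb]
      · exact (hint _ h1 h1').smul_measure ENNReal.ofReal_ne_top
      · exact (hint _ h2 h2').smul_measure ENNReal.ofReal_ne_top
  have hμe : Integrable (fun x => emb (s x, x)) μ := by
    refine Integrable.mono' (g := fun x => 1 + ‖x‖) ((integrable_const _).add hμ.norm)
      (measurable_emb.comp (hs.prodMk measurable_id)).aestronglyMeasurable ?_
    exact Eventually.of_forall fun x => norm_emb_le (s x, x)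
  suffices hmem : (∫ x, emb (s x, x) ∂μ) ∈ closure C by
    obtain ⟨c, ⟨l, hl, hl', rfl⟩, hd⟩ := Metric.mem_closure_iff.1 hmem ε hε
    exact ⟨l, hl, hl', by rw [dist_comm, dist_eq_norm] at hd; exact hd⟩
  by_contra hnot
  obtain ⟨L, u, hLu, huL⟩ := geometric_hahn_banach_closed_point hCconv.closure isClosed_closure hnot
  set g : I → V → ℝ := fun i y => L (emb (i, y)) with hg
  have hgform : ∀ i y, g i y = L (Pi.single i (1, 0)) + L (Pi.single i (0, y)) := by
    intro i y
    rw [hg, ← map_add, ← Pi.single_add]; simp [emb]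
  have hgadd : ∀ i x y, ∀ a b : ℝ, a + b = 1 → g i (a • x + b • y) = a * g i x + b * g i y := by
    intro i x y a b hab
    have : emb (i, a • x + b • y) = a • emb (i, x) + b • emb (i, y) := by
      simp only [emb]
      rw [← Pi.single_smul, ← Pi.single_smul, ← Pi.single_add]; simp [hab]
    simp only [hg, this, map_add, map_smul, smul_eq_mul]
  have hgl : ∀ i x y, g i x ≤ g i y + ‖L‖ * dist x y := by
    intro i x y
    have : g i x - g i y = L (Pi.single i (0, x - y)) := by
      rw [hg]; simp only
      rw [← map_sub]; congr 1; simp only [emb]; rw [← Pi.single_sub]; simp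
    have h2 : L (Pi.single i (0, x - y)) ≤ ‖L‖ * ‖(Pi.single i (0, x - y) : I → ℝ × V)‖ :=
      (le_abs_self _).trans (L.le_opNorm _)
    rw [Pi.norm_single] at h2
    simp only [Prod.norm_def, norm_zero, ← dist_eq_norm] at h2
    rw [max_eq_right dist_nonneg] at h2
    linarith
  have hgm : ∀ i, Measurable (g i) := fun i =>
    L.measurable.comp (measurable_emb.comp (measurable_const.prodMk measurable_id))
  obtain ⟨j, hj, hle⟩ := exists_argmax g hgm
  have hφc : ConvexOn ℝ Set.univ (fun y => g (j y) y) := by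
    refine ⟨convex_univ, fun x _ y _ a b ha hb hab => ?_⟩
    dsimp only
    rw [hgadd _ _ _ _ _ hab]
    exact add_le_add (mul_le_mul_of_nonneg_left (hle _ _) ha)
      (mul_le_mul_of_nonneg_left (hle _ _) hb)
  have hφl : LipschitzWith ‖L‖₊ (fun y => g (j y) y) := by
    refine LipschitzWith.of_le_add_mul _ fun x y => ?_
    exact (hgl _ _ _).trans (add_le_add_left (hle _ _) _)
  have hord := H _ hφc ⟨_, hφl⟩
  have hlip_int : ∀ ρ : Measure V, IsProbabilityMeasure ρ → Integrable (fun x => x) ρ →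
      Integrable (fun y => g (j y) y) ρ := by
    intro ρ _ hρ
    refine Integrable.mono' (g := fun x => ‖g (j 0) 0‖ + ‖L‖ * ‖x‖)
      ((integrable_const _).add (hρ.norm.const_mul _)) hφl.continuous.aestronglyMeasurable ?_
    refine Eventually.of_forall fun x => ?_
    have := hφl.dist_le_mul x 0
    rw [dist_zero_right, dist_eq_norm] at this
    have h3 := norm_le_norm_add_norm_sub' (g (j x) x) (g (j 0) 0)
    simp only [coe_nnnorm] at this
    linarith
  have hmemC : (∫ p, emb p ∂(ν.map fun y => (j y, y))) ∈ C := by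
    refine ⟨_, Measure.isProbabilityMeasure_map (by fun_prop), ?_, rfl⟩
    rw [Measure.map_map measurable_snd (by fun_prop)]
    exact Measure.map_id
  have h1 := hLu _ (subset_closure hmemC)
  rw [integral_map (by fun_prop) measurable_emb.aestronglyMeasurable,
    ← ContinuousLinearMap.integral_comp_comm] at h1
  rotate_left
  · refine Integrable.mono' (g := fun x => 1 + ‖x‖) ((integrable_const _).add hν.norm)
      (measurable_emb.comp (hj.prodMk measurable_id)).aestronglyMeasurable ?_
    exact Eventually.of_forall fun x => norm_emb_le (j x, x)
  rw [← ContinuousLinearMap.integral_comp_comm _ hμe] at huL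
  have h2 : ∫ x, L (emb (s x, x)) ∂μ ≤ ∫ x, g (j x) x ∂μ := by
    apply integral_mono (L.integrable_comp hμe) (hlip_int _ inferInstance hμ)
    exact fun x => hle x (s x)
  change ∫ y, g (j y) y ∂ν < u at h1
  linarith
end

section
open scoped BoundedContinuousFunction Topology
variable {V : Type*} [NormedAddCommGroup V] [NormedSpace ℝ V] [FiniteDimensional ℝ V]
  [MeasurableSpace V] [BorelSpace V]

lemma approx2' {I : Type*} [Fintype I] [Nonempty I] [MeasurableSpace I] [MeasurableSingletonClass I]
    (s' : V → I) (hs' : Measurable s') (v : I → V) (μ ν : Measure V) [IsProbabilityMeasure μ]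
    [IsProbabilityMeasure ν] (hμ : Integrable (fun x => x) μ) (hν : Integrable (fun x => x) ν)
    (H : LipCX μ ν) (ε : ℝ) (hε : 0 < ε) :
    ∃ π : Measure (V × V), IsProbabilityMeasure π ∧ π.map Prod.snd = ν ∧
      ∀ f : V →ᵇ ℝ,
        ‖∫ p, f p.1 • ((1 : ℝ), p.2) ∂π - ∫ x, f (v (s' x)) • ((1 : ℝ), x) ∂μ‖ ≤ ε * ‖f‖ := by
  classical
  have : SecondCountableTopology V := by
    have := FiniteDimensional.proper ℝ V
    infer_instance
  have hN : (0 : ℝ) < Fintype.card I := by exact_mod_cast Fintype.card_pos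
  obtain ⟨lam, hl, hsnd, hclose⟩ := approx1 s' hs' μ ν hμ hν H (ε / Fintype.card I) (by positivity)
  have hm : Measurable (fun p : I × V => (v p.1, p.2)) := by
    have := measurable_of_finite v
    fun_prop
  refine ⟨lam.map (fun p => (v p.1, p.2)), Measure.isProbabilityMeasure_map hm.aemeasurable,
    ?_, fun f => ?_⟩
  · rw [Measure.map_map measurable_snd hm]; exact hsnd
  let M : (I → ℝ × V) →L[ℝ] ℝ × V := ∑ i : I, f (v i) • ContinuousLinearMap.proj i
  have hM : ∀ p : I × V, M (emb p) = f (v p.1) • ((1 : ℝ), p.2) := by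
    intro p
    simp only [M, sum_apply, smul_apply,
      ContinuousLinearMap.proj_apply]
    rw [Finset.sum_eq_single p.1]
    · rw [emb_same]
    · intro b _ hb; rw [emb_ne _ _ hb, smul_zero]
    · simp
  have hMb : ∀ t, ‖M t‖ ≤ Fintype.card I * ‖f‖ * ‖t‖ := by
    intro t
    simp only [M, sum_apply, smul_apply,
      ContinuousLinearMap.proj_apply]
    refine (norm_sum_le _ _).trans ?_
    have : ∀ i ∈ (Finset.univ : Finset I), ‖f (v i) • t i‖ ≤ ‖f‖ * ‖t‖ := by
      intro i _
      rw [norm_smul]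
      exact mul_le_mul (f.norm_coe_le_norm _) (norm_le_pi_norm _ _) (norm_nonneg _) (norm_nonneg _)
    refine (Finset.sum_le_card_nsmul _ _ _ this).trans ?_
    rw [nsmul_eq_mul, Finset.card_univ, mul_assoc]
  have hμe : Integrable (fun x => emb (s' x, x)) μ := by
    refine Integrable.mono' (g := fun x => 1 + ‖x‖) ((integrable_const _).add hμ.norm)
      (measurable_emb.comp (hs'.prodMk measurable_id)).aestronglyMeasurable ?_
    exact Eventually.of_forall fun x => norm_emb_le (s' x, x)
  have hle : Integrable (emb : I × V → I → ℝ × V) lam := by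
    apply integrable_emb
    rw [← hsnd] at hν
    exact hν.comp_measurable measurable_snd
  have hfc : Continuous (fun p : V × V => f p.1 • ((1 : ℝ), p.2)) := by fun_prop
  rw [integral_map hm.aemeasurable hfc.aestronglyMeasurable]
  have e1 : ∫ p : I × V, f (v p.1) • ((1 : ℝ), p.2) ∂lam = M (∫ p, emb p ∂lam) := by
    rw [← ContinuousLinearMap.integral_comp_comm _ hle]; simp_rw [hM]
  have e2 : ∫ x, f (v (s' x)) • ((1 : ℝ), x) ∂μ = M (∫ x, emb (s' x, x) ∂μ) := by
    rw [← ContinuousLinearMap.integral_comp_comm _ hμe]; simp_rw [hM]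
  dsimp only
  rw [e1, e2, ← map_sub]
  refine (hMb _).trans ?_
  calc _ ≤ Fintype.card I * ‖f‖ * (ε / Fintype.card I) := by gcongr
    _ = ε * ‖f‖ := by field_simp

lemma approx2 (s : SimpleFunc V V) (μ ν : Measure V) [IsProbabilityMeasure μ]
    [IsProbabilityMeasure ν] (hμ : Integrable (fun x => x) μ) (hν : Integrable (fun x => x) ν)
    (H : LipCX μ ν) (ε : ℝ) (hε : 0 < ε) :
    ∃ π : Measure (V × V), IsProbabilityMeasure π ∧ π.map Prod.snd = ν ∧
      ∀ f : V →ᵇ ℝ,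
        ‖∫ p, f p.1 • ((1 : ℝ), p.2) ∂π - ∫ x, f (s x) • ((1 : ℝ), x) ∂μ‖ ≤ ε * ‖f‖ := by
  have hne : Nonempty {v // v ∈ s.range} := ⟨⟨s 0, s.mem_range_self 0⟩⟩
  exact approx2' (I := {v // v ∈ s.range}) (fun x => ⟨s x, s.mem_range_self x⟩)
    (s.measurable.subtype_mk) Subtype.val μ ν hμ hν H ε hε

lemma trunc_bound (ν : Measure V) (hν : Integrable (fun x => x) ν)
    (f : V →ᵇ ℝ) (l : V →L[ℝ] ℝ) (R : ℝ) (hR : 0 ≤ R) (ρ : Measure (V × V)) [IsProbabilityMeasure ρ]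
    (hρ : ρ.map Prod.snd = ν) :
    |∫ p, f p.1 * l p.2 ∂ρ - ∫ p, f p.1 * max (-R) (min R (l p.2)) ∂ρ| ≤
      ‖f‖ * ∫ y, |l y - max (-R) (min R (l y))| ∂ν := by
  have : SecondCountableTopology V := by
    have := FiniteDimensional.proper ℝ V
    infer_instance
  have hc : Continuous fun y => max (-R) (min R (l y)) := by fun_prop
  have hbd : ∀ t : ℝ, |max (-R) (min R t)| ≤ |t| := by
    intro t
    rcases le_total R t with h | h
    · rw [min_eq_left h, max_eq_right (by linarith), abs_of_nonneg hR,
        abs_of_nonneg (by linarith)]; linarith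
    · rw [min_eq_right h]
      rcases le_total (-R) t with h' | h'
      · rw [max_eq_right h']
      · rw [max_eq_left h', abs_of_nonpos (by linarith), abs_of_nonpos (by linarith)]; linarith
  have hl : Integrable (fun y => l y) ν := l.integrable_comp hν
  have hcl : Integrable (fun y => max (-R) (min R (l y))) ν :=
    hl.norm.mono' hc.aestronglyMeasurable (Eventually.of_forall fun y => hbd _)
  have hd : Integrable (fun y => l y - max (-R) (min R (l y))) ν := hl.sub hcl
  have tr : ∀ g : V → ℝ, Integrable g ν → Integrable (fun p : V × V => g p.2) ρ := by
    intro g hg; rw [← hρ] at hg; exact hg.comp_measurable measurable_snd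
  have fm : ∀ g : V × V → ℝ, Integrable g ρ → Integrable (fun p : V × V => f p.1 * g p) ρ := by
    intro g hg
    refine hg.bdd_mul (c := ‖f‖) ?_ (Eventually.of_forall fun p => f.norm_coe_le_norm _)
    have : Continuous fun p : V × V => f p.1 := by fun_prop
    exact this.aestronglyMeasurable
  rw [← integral_sub (fm _ (tr _ hl)) (fm _ (tr _ hcl)), ← hρ,
    integral_map measurable_snd.aemeasurable (by rw [hρ]; exact hd.abs.1), ← integral_const_mul,
    ← Real.norm_eq_abs]
  refine norm_integral_le_of_norm_le ((tr _ hd.abs).const_mul _) (Eventually.of_forall fun p => ?_)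
  rw [← mul_sub, norm_mul, Real.norm_eq_abs (_ - _)]
  gcongr
  exact f.norm_coe_le_norm _

lemma trunc_tendsto (ν : Measure V) (hν : Integrable (fun x => x) ν) (l : V →L[ℝ] ℝ) :
    Tendsto (fun R : ℕ => ∫ y, |l y - max (-(R : ℝ)) (min R (l y))| ∂ν) atTop (𝓝 0) := by
  have : SecondCountableTopology V := by
    have := FiniteDimensional.proper ℝ V
    infer_instance
  have hl : Integrable (fun y => l y) ν := l.integrable_comp hν
  rw [← integral_zero V ℝ (μ := ν)]
  refine tendsto_integral_of_dominated_convergence (fun y => |l y|) ?_ hl.abs ?_ ?_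
  · intro n
    have : Continuous fun y => |l y - max (-(n : ℝ)) (min n (l y))| := by fun_prop
    exact this.aestronglyMeasurable
  · intro n
    refine Eventually.of_forall fun y => ?_
    rw [Real.norm_eq_abs, abs_abs]
    have hn : (0 : ℝ) ≤ n := n.cast_nonneg
    generalize l y = t
    generalize (n : ℝ) = R at hn
    rcases le_total R t with h | h
    · rw [min_eq_left h, max_eq_right (by linarith), abs_of_nonneg (by linarith),
        abs_of_nonneg (by linarith)]; linarith
    · rw [min_eq_right h]
      rcases le_total (-R) t with h' | h'
      · rw [max_eq_right h']; simp
      · rw [max_eq_left h', abs_of_nonpos (by linarith), abs_of_nonpos (by linarith)]; linarith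
  · refine Eventually.of_forall fun y => ?_
    refine tendsto_const_nhds.congr' ?_
    filter_upwards [eventually_ge_atTop ⌈|l y|⌉₊] with n hn
    have := (Nat.ceil_le.1 hn)
    rw [abs_le] at this
    rw [min_eq_right this.2, max_eq_right this.1]; simp
end

section
open scoped BoundedContinuousFunction Topology
variable {V : Type*} [NormedAddCommGroup V] [NormedSpace ℝ V] [FiniteDimensional ℝ V]
  [MeasurableSpace V] [BorelSpace V]

lemma strassen (μ ν : Measure V) [IsProbabilityMeasure μ]
    [IsProbabilityMeasure ν] (hμ : Integrable (fun x => x) μ) (hν : Integrable (fun x => x) ν)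
    (H : LipCX μ ν) :
    ∃ π : Measure (V × V), IsProbabilityMeasure π ∧ π.map Prod.fst = μ ∧ π.map Prod.snd = ν ∧
      ∀ (f : V →ᵇ ℝ) (l : V →L[ℝ] ℝ), ∫ p, f p.1 * l p.2 ∂π = ∫ x, f x * l x ∂μ := by
  have hproper := FiniteDimensional.proper ℝ V
  have hsc : SecondCountableTopology V := inferInstance
  let s : ℕ → SimpleFunc V V := fun n =>
    SimpleFunc.approxOn id measurable_id Set.univ 0 (Set.mem_univ _) n
  have hs : ∀ x, Tendsto (fun n => s n x) atTop (𝓝 x) := fun x =>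
    SimpleFunc.tendsto_approxOn measurable_id (Set.mem_univ 0) (by simp)
  have hex := fun n : ℕ => approx2 (s n) μ ν hμ hν H (1 / ((n : ℝ) + 1)) (by positivity)
  choose ρ hρp hρs hρ using hex
  -- convergence
  have hconv0 : ∀ f : V →ᵇ ℝ, Tendsto (fun n => ∫ x, f (s n x) • ((1 : ℝ), x) ∂μ) atTop
      (𝓝 (∫ x, f x • ((1 : ℝ), x) ∂μ)) := by
    intro f
    refine tendsto_integral_of_dominated_convergence (fun x => ‖f‖ * (1 + ‖x‖)) ?_
      (((integrable_const _).add hμ.norm).const_mul _) ?_ ?_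
    · intro n
      have : Measurable fun x => f (s n x) • ((1 : ℝ), x) := by
        have h1 : Measurable fun x => f (s n x) :=
          f.continuous.measurable.comp (s n).measurable
        exact h1.smul (by fun_prop)
      exact this.aestronglyMeasurable
    · intro n
      refine Eventually.of_forall fun x => ?_
      rw [norm_smul]
      gcongr
      · exact f.norm_coe_le_norm _
      · simp [Prod.norm_def]
    · refine Eventually.of_forall fun x => ?_
      exact ((f.continuous.tendsto x).comp (hs x)).smul_const _
  have hconv : ∀ f : V →ᵇ ℝ, Tendsto (fun n => ∫ p, f p.1 • ((1 : ℝ), p.2) ∂(ρ n)) atTop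
      (𝓝 (∫ x, f x • ((1 : ℝ), x) ∂μ)) := by
    intro f
    refine tendsto_of_tendsto_of_dist (hconv0 f) ?_
    have h0 : Tendsto (fun n : ℕ => 1 / ((n : ℝ) + 1) * ‖f‖) atTop (𝓝 0) := by
      simpa using (tendsto_one_div_add_atTop_nhds_zero_nat (𝕜 := ℝ)).mul_const ‖f‖
    refine squeeze_zero (fun _ => dist_nonneg) (fun n => ?_) h0
    rw [dist_comm, dist_eq_norm]
    exact hρ n f
  have hρi : ∀ n, Integrable (fun p : V × V => p.2) (ρ n) := by
    intro n
    have h := hν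
    rw [← hρs n] at h
    exact h.comp_measurable measurable_snd
  have hint : ∀ n, ∀ f : V →ᵇ ℝ, Integrable (fun p : V × V => f p.1 • ((1 : ℝ), p.2)) (ρ n) := by
    intro n f
    have hc : Continuous (fun p : V × V => f p.1 • ((1 : ℝ), p.2)) := by fun_prop
    refine Integrable.mono' (g := fun p => ‖f‖ * (1 + ‖p.2‖))
      (((integrable_const _).add (hρi n).norm).const_mul _) hc.aestronglyMeasurable ?_
    refine Eventually.of_forall fun x => ?_
    rw [norm_smul]
    gcongr
    · exact f.norm_coe_le_norm _
    · simp [Prod.norm_def]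
  have hintμ : ∀ f : V →ᵇ ℝ, Integrable (fun x => f x • ((1 : ℝ), x)) μ := by
    intro f
    have hc : Continuous (fun x => f x • ((1 : ℝ), x)) := by fun_prop
    refine Integrable.mono' (g := fun p => ‖f‖ * (1 + ‖p‖))
      (((integrable_const _).add hμ.norm).const_mul _) hc.aestronglyMeasurable ?_
    refine Eventually.of_forall fun x => ?_
    rw [norm_smul]
    gcongr
    · exact f.norm_coe_le_norm _
    · simp [Prod.norm_def]
  have hconvL : ∀ (f : V →ᵇ ℝ) (L : ℝ × V →L[ℝ] ℝ),
      Tendsto (fun n => ∫ p, f p.1 * L ((1 : ℝ), p.2) ∂(ρ n)) atTop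
      (𝓝 (∫ x, f x * L ((1 : ℝ), x) ∂μ)) := by
    intro f L
    have h := (L.continuous.tendsto _).comp (hconv f)
    rw [← L.integral_comp_comm (hintμ f)] at h
    simp only [map_smul, smul_eq_mul] at h
    refine h.congr fun n => ?_
    rw [Function.comp_apply, ← L.integral_comp_comm (hint n f)]
    simp only [map_smul, smul_eq_mul]
  have hconv1 : ∀ f : V →ᵇ ℝ, Tendsto (fun n => ∫ p, f p.1 ∂(ρ n)) atTop (𝓝 (∫ x, f x ∂μ)) := by
    intro f
    simpa using hconvL f (ContinuousLinearMap.fst ℝ ℝ V)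
  have hconv2 : ∀ (f : V →ᵇ ℝ) (l : V →L[ℝ] ℝ),
      Tendsto (fun n => ∫ p, f p.1 * l p.2 ∂(ρ n)) atTop (𝓝 (∫ x, f x * l x ∂μ)) := by
    intro f l
    simpa using hconvL f (l.comp (ContinuousLinearMap.snd ℝ ℝ V))
  -- tightness
  let R : ℕ → ProbabilityMeasure (V × V) := fun n => ⟨ρ n, hρp n⟩
  let M : ProbabilityMeasure V := ⟨μ, inferInstance⟩
  let F : ProbabilityMeasure (V × V) → ProbabilityMeasure V :=
    fun r => r.map (f := Prod.fst) measurable_fst.aemeasurable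
  have hF : Continuous F := ProbabilityMeasure.continuous_map continuous_fst
  let G : ProbabilityMeasure (V × V) → ProbabilityMeasure V :=
    fun r => r.map (f := Prod.snd) measurable_snd.aemeasurable
  have hG : Continuous G := ProbabilityMeasure.continuous_map continuous_snd
  have hFR : Tendsto (fun n => F (R n)) atTop (𝓝 M) := by
    rw [ProbabilityMeasure.tendsto_iff_forall_integral_tendsto]
    intro f
    refine (hconv1 f).congr fun n => ?_
    change _ = ∫ x, f x ∂((ρ n).map Prod.fst)
    rw [integral_map measurable_fst.aemeasurable f.continuous.aestronglyMeasurable]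
  have htight : IsTightMeasureSet
      {((r : ProbabilityMeasure (V × V)) : Measure (V × V)) | r ∈ Set.range R} := by
    apply IsTightMeasureSet.prodMk
    · have hc := hFR.isCompact_insert_range
      have := isTightMeasureSet_of_isCompact_closure (by rwa [hc.isClosed.closure_eq])
      refine this.subset ?_
      rintro _ ⟨_, ⟨_, ⟨n, rfl⟩, rfl⟩, rfl⟩
      exact ⟨F (R n), Or.inr ⟨n, rfl⟩, rfl⟩
    · refine (isTightMeasureSet_singleton (μ := ν)).subset ?_
      rintro _ ⟨_, ⟨_, ⟨n, rfl⟩, rfl⟩, rfl⟩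
      exact hρs n
  have hcomp := isCompact_closure_of_isTightMeasureSet htight
  let U : Ultrafilter ℕ := hyperfilter ℕ
  have hU : (U : Filter ℕ) ≤ atTop := Nat.hyperfilter_le_atTop
  obtain ⟨π, -, hπ⟩ := hcomp.ultrafilter_le_nhds (U.map R) (by
    rw [le_principal_iff]
    exact Filter.mem_map.2 (Eventually.of_forall fun n => subset_closure ⟨n, rfl⟩))
  have hπ' : Tendsto R U (𝓝 π) := hπ
  have hfst : (π : Measure (V × V)).map Prod.fst = μ := by
    have := tendsto_nhds_unique ((hF.tendsto π).comp hπ') (hFR.mono_left hU)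
    exact congrArg (fun r : ProbabilityMeasure V => (r : Measure V)) this
  have hsnd : (π : Measure (V × V)).map Prod.snd = ν := by
    have h2 : Tendsto (fun n => G (R n)) U (𝓝 (⟨ν, inferInstance⟩ : ProbabilityMeasure V)) := by
      refine tendsto_const_nhds.congr fun n => ?_
      exact Subtype.ext (hρs n).symm
    have := tendsto_nhds_unique ((hG.tendsto π).comp hπ') h2
    exact congrArg (fun r : ProbabilityMeasure V => (r : Measure V)) this
  refine ⟨π, inferInstance, hfst, hsnd, fun f l => ?_⟩
  have key : ∀ N : ℕ, |∫ p, f p.1 * l p.2 ∂(π : Measure (V × V)) - ∫ x, f x * l x ∂μ| ≤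
      2 * (‖f‖ * ∫ y, |l y - max (-(N : ℝ)) (min N (l y))| ∂ν) := by
    intro N
    have b1 := trunc_bound ν hν f l N N.cast_nonneg π hsnd
    have b2 := fun n => trunc_bound ν hν f l N N.cast_nonneg (ρ n) (hρs n)
    let g : (V × V) →ᵇ ℝ := BoundedContinuousFunction.ofNormedAddCommGroup
      (fun p : V × V => f p.1 * max (-(N : ℝ)) (min N (l p.2))) (by fun_prop) (‖f‖ * N) (by
        intro p
        rw [norm_mul]
        gcongr
        · exact f.norm_coe_le_norm _
        · rw [Real.norm_eq_abs, abs_le]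
          have : (0 : ℝ) ≤ N := N.cast_nonneg
          exact ⟨le_max_left _ _, max_le (by linarith) (min_le_left _ _)⟩)
    have hg := (ProbabilityMeasure.tendsto_iff_forall_integral_tendsto.1 hπ') g
    have h3 := le_of_tendsto ((((hconv2 f l).mono_left hU).sub hg).abs) (Eventually.of_forall b2)
    have h4 : |∫ p, f p.1 * l p.2 ∂(π : Measure (V × V)) - ∫ p, g p ∂(π : Measure (V × V))| ≤
      (‖f‖ * ∫ y, |l y - max (-(N : ℝ)) (min N (l y))| ∂ν) := b1
    rw [abs_le] at h3 h4 ⊢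
    constructor <;> linarith [h3.1, h3.2, h4.1, h4.2]
  have hlim : Tendsto (fun N : ℕ => 2 * (‖f‖ * ∫ y, |l y - max (-(N : ℝ)) (min N (l y))| ∂ν))
      atTop (𝓝 0) := by
    simpa using ((trunc_tendsto ν hν l).const_mul ‖f‖).const_mul 2
  have := ge_of_tendsto' hlim key
  exact sub_eq_zero.1 (abs_nonpos_iff.1 this)
end

section
open scoped BoundedContinuousFunction Topology

lemma exists_W {S E : Type*} [MeasurableSpace S] [MeasurableSpace E] [StandardBorelSpace E]
    [Nonempty E]
    (κ₁ κ₂ : Kernel S E) [IsMarkovKernel κ₁] [IsMarkovKernel κ₂] :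
    ∃ W : S → ℝ, Measurable W ∧ (∀ z, 0 ≤ W z ∧ W z ≤ 1) ∧
      Measurable[MeasurableSpace.comap W inferInstance] (fun z => κ₁ z) ∧
      Measurable[MeasurableSpace.comap W inferInstance] (fun z => κ₂ z) := by
  let e := embeddingReal E
  have he : MeasurableEmbedding e := measurableEmbedding_embeddingReal E
  let A : ℚ → Set E := fun q => e ⁻¹' Set.Iic (q : ℝ)
  have hA : ∀ q, MeasurableSet (A q) := fun q => he.measurable measurableSet_Iic
  let T := (ℚ → ENNReal) × (ℚ → ENNReal)
  let g : S → T := fun z => (fun q => κ₁ z (A q), fun q => κ₂ z (A q))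
  have hg : Measurable g := by
    refine Measurable.prodMk (measurable_pi_iff.2 fun q => ?_) (measurable_pi_iff.2 fun q => ?_)
    · exact κ₁.measurable_coe (hA q)
    · exact κ₂.measurable_coe (hA q)
  let c : T → unitInterval := unitInterval.sigmoid ∘ embeddingReal T
  have hc : MeasurableEmbedding c := measurableEmbedding_sigmoid_comp_embeddingReal T
  have hv : MeasurableEmbedding (Subtype.val : unitInterval → ℝ) :=
    MeasurableEmbedding.subtype_coe measurableSet_Icc
  have hcv := hv.comp hc
  let W : S → ℝ := fun z => (c (g z) : ℝ)
  have hgen : (‹MeasurableSpace E› : MeasurableSpace E) = .generateFrom (Set.range A) := by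
    rw [← he.comap_eq, show (Real.measurableSpace : MeasurableSpace ℝ) = borel ℝ from
      BorelSpace.measurable_eq, Real.borel_eq_generateFrom_Iic_rat,
      MeasurableSpace.comap_generateFrom]
    congr 1
    ext t
    simp only [Set.mem_image, Set.mem_iUnion, Set.mem_singleton_iff, Set.mem_range]
    constructor
    · rintro ⟨_, ⟨q, rfl⟩, rfl⟩; exact ⟨q, rfl⟩
    · rintro ⟨q, rfl⟩; exact ⟨_, ⟨q, rfl⟩, rfl⟩
  have hpi : IsPiSystem (Set.range A) := by
    rintro _ ⟨p, rfl⟩ _ ⟨q, rfl⟩ _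
    refine ⟨min p q, ?_⟩
    ext x
    simp [A]
  have hgW : Measurable[MeasurableSpace.comap W inferInstance] g := by
    intro t ht
    refine ⟨_, hcv.measurableSet_image.2 ht, ?_⟩
    ext z
    simp only [W, Set.mem_preimage]
    exact hcv.injective.mem_set_image (s := t) (a := g z)
  refine ⟨W, by exact hcv.measurable.comp hg, fun z => (c (g z)).2, ?_, ?_⟩
  · refine @Measurable.measure_of_isPiSystem_of_isProbabilityMeasure S E
      (MeasurableSpace.comap W inferInstance) _ _ _ _ hgen hpi ?_
    rintro _ ⟨q, rfl⟩
    exact ((measurable_pi_apply q).comp measurable_fst).comp hgW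
  · refine @Measurable.measure_of_isPiSystem_of_isProbabilityMeasure S E
      (MeasurableSpace.comap W inferInstance) _ _ _ _ hgen hpi ?_
    rintro _ ⟨q, rfl⟩
    exact ((measurable_pi_apply q).comp measurable_snd).comp hgW

lemma lip_integrable {Ω V : Type*} [MeasurableSpace Ω] [NormedAddCommGroup V]
    (P : Measure Ω) [IsProbabilityMeasure P] (φ : V → ℝ) (K : NNReal) (h : LipschitzWith K φ)
    (U : Ω → V) (hU : Integrable U P) : Integrable (fun ω => φ (U ω)) P := by
  refine Integrable.mono' (g := fun ω => ‖φ 0‖ + K * ‖U ω‖)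
    ((integrable_const _).add (hU.norm.const_mul _))
    (h.continuous.comp_aestronglyMeasurable hU.1) ?_
  refine Eventually.of_forall fun x => ?_
  have := h.dist_le_mul (U x) 0
  rw [dist_zero_right, dist_eq_norm] at this
  have h3 := norm_le_norm_add_norm_sub' (φ (U x)) (φ 0)
  linarith

lemma cond_order {d : ℕ} {Ω : Type} (m : MeasurableSpace Ω) {mΩ : MeasurableSpace Ω}
    (P : Measure Ω) [IsProbabilityMeasure P] (hm : m ≤ mΩ) (X Y : Ω → Euc d)
    (hX : Integrable X P) (hY : Integrable Y P) (W : Ω → ℝ) (hW : Measurable[m] W)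
    (hW01 : ∀ ω, 0 ≤ W ω ∧ W ω ≤ 1) (H : CondCXLe P m X Y)
    (φ : Euc d × ℝ → ℝ) (hφ : ConvexOn ℝ Set.univ φ) (K : NNReal) (hK : LipschitzWith K φ) :
    ∫ ω, φ (X ω, W ω) ∂P ≤ ∫ ω, φ (Y ω, W ω) ∂P := by
  have hWm : Measurable W := hW.mono hm le_rfl
  have hWi : Integrable W P := by
    refine Integrable.mono' (integrable_const (1 : ℝ)) hWm.aestronglyMeasurable ?_
    exact Eventually.of_forall fun ω => by
      rw [Real.norm_eq_abs, abs_of_nonneg (hW01 ω).1]; exact (hW01 ω).2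
  have key : ∀ N : ℕ, ∫ ω, φ (X ω, W ω) ∂P ≤
      ∫ ω, φ (Y ω, W ω) ∂P + 2 * (K * (1 / ((N : ℝ) + 1))) := by
    intro N
    let n : ℝ := (N : ℝ) + 1
    have hn : 0 < n := by positivity
    let k : Ω → ℕ := fun ω => ⌊n * W ω⌋₊
    have hk : Measurable[m] k := Nat.measurable_floor.comp (hW.const_mul n)
    have hkN : ∀ ω, k ω < N + 2 := by
      intro ω
      have : k ω ≤ N + 1 := by
        have h1 : n * W ω ≤ ((N + 1 : ℕ) : ℝ) := by
          push_cast; nlinarith [hW01 ω]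
        exact (Nat.floor_le_floor h1).trans (by rw [Nat.floor_natCast])
      omega
    have hdist : ∀ ω, |W ω - k ω / n| ≤ 1 / n := by
      intro ω
      have h1 := Nat.floor_le (mul_nonneg hn.le (hW01 ω).1)
      have h2 := Nat.lt_floor_add_one (n * W ω)
      have h3 : W ω - k ω / n = (n * W ω - k ω) / n := by field_simp
      rw [h3, abs_div, abs_of_pos hn]
      gcongr
      rw [abs_le]; constructor <;> simp only [k] <;> linarith
    have hclose : ∀ (x : Euc d) ω, |φ (x, W ω) - φ (x, k ω / n)| ≤ K * (1 / n) := by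
      intro x ω
      have h1 := hK.dist_le_mul (x, W ω) (x, k ω / n)
      rw [Prod.dist_eq, dist_self, max_eq_right dist_nonneg, Real.dist_eq, Real.dist_eq] at h1
      exact h1.trans (mul_le_mul_of_nonneg_left (hdist ω) K.2)
    have hset : ∀ i, MeasurableSet[m] {ω | k ω = i} := fun i => hk (measurableSet_singleton i)
    have hlip : ∀ t : ℝ, LipschitzWith K (fun x : Euc d => φ (x, t)) := by
      intro t
      refine LipschitzWith.of_dist_le_mul fun x y => ?_
      have h1 := hK.dist_le_mul (x, t) (y, t)
      rwa [Prod.dist_eq, dist_self, max_eq_left dist_nonneg] at h1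
    have hcx : ∀ t : ℝ, ConvexOn ℝ Set.univ (fun x : Euc d => φ (x, t)) := by
      intro t
      refine ⟨convex_univ, fun x _ y _ a b ha hb hab => ?_⟩
      have := hφ.2 (Set.mem_univ (x, t)) (Set.mem_univ (y, t)) ha hb hab
      have e : a • (x, t) + b • (y, t) = (a • x + b • y, t) := by
        ext1
        · simp
        · simp [← add_mul, hab]
      rwa [e] at this
    have hint : ∀ U : Ω → Euc d, Integrable U P → ∀ t : ℝ,
        Integrable (fun ω => φ (U ω, t)) P := fun U hU t =>
      lip_integrable P _ K (hlip t) U hU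
    have hcell : ∀ i : ℕ, ∫ ω in {ω | k ω = i}, φ (X ω, i / n) ∂P ≤
        ∫ ω in {ω | k ω = i}, φ (Y ω, i / n) ∂P := by
      intro i
      rw [← setIntegral_condExp hm (hint X hX _) (hset i),
        ← setIntegral_condExp hm (hint Y hY _) (hset i)]
      exact setIntegral_mono_ae integrable_condExp.integrableOn integrable_condExp.integrableOn
        (H _ (hcx _) (hint X hX _) (hint Y hY _))
    have hdec : ∀ U : Ω → Euc d, (fun ω => φ (U ω, k ω / n)) = fun ω =>
        ∑ i ∈ Finset.range (N + 2), ({ω | k ω = i}).indicator (fun ω => φ (U ω, (i : ℝ) / n)) ω := by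
      intro U
      funext ω
      rw [Finset.sum_eq_single (k ω)]
      · simp
      · intro b _ hb
        exact Set.indicator_of_notMem (fun h => hb h.symm) _
      · intro h; exact absurd (Finset.mem_range.2 (hkN ω)) h
    have hindi : ∀ U : Ω → Euc d, Integrable U P → ∀ i ∈ Finset.range (N + 2),
        Integrable (({ω | k ω = i}).indicator (fun ω => φ (U ω, (i : ℝ) / n))) P :=
      fun U hU i _ => (hint U hU _).indicator (hm _ (hset i))
    have hsum : ∀ U : Ω → Euc d, Integrable U P → ∫ ω, φ (U ω, k ω / n) ∂P =
        ∑ i ∈ Finset.range (N + 2), ∫ ω in {ω | k ω = i}, φ (U ω, i / n) ∂P := by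
      intro U hU
      rw [hdec U, integral_finsetSum _ (hindi U hU)]
      exact Finset.sum_congr rfl fun i _ => integral_indicator (hm _ (hset i))
    have hki : ∀ U : Ω → Euc d, Integrable U P → Integrable (fun ω => φ (U ω, k ω / n)) P := by
      intro U hU
      rw [hdec U]; exact integrable_finsetSum _ (hindi U hU)
    have hWint : ∀ U : Ω → Euc d, Integrable U P → Integrable (fun ω => φ (U ω, W ω)) P :=
      fun U hU => lip_integrable P φ K hK _ (hU.prodMk hWi)
    have hd : ∀ U : Ω → Euc d, Integrable U P →
        |∫ ω, φ (U ω, W ω) ∂P - ∫ ω, φ (U ω, k ω / n) ∂P| ≤ K * (1 / n) := by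
      intro U hU
      rw [← integral_sub (hWint U hU) (hki U hU), ← Real.norm_eq_abs]
      refine (norm_integral_le_of_norm_le (integrable_const (K * (1 / n)))
        (Eventually.of_forall fun ω => hclose (U ω) ω)).trans ?_
      simp
    have hle : ∫ ω, φ (X ω, k ω / n) ∂P ≤ ∫ ω, φ (Y ω, k ω / n) ∂P := by
      rw [hsum X hX, hsum Y hY]
      exact Finset.sum_le_sum fun i _ => hcell i
    have h1 := (abs_le.1 (hd X hX)).2
    have h2 := (abs_le.1 (hd Y hY)).1
    change _ ≤ _ + 2 * (K * (1 / n))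
    linarith
  have hlim : Tendsto (fun N : ℕ => ∫ ω, φ (Y ω, W ω) ∂P + 2 * (K * (1 / ((N : ℝ) + 1)))) atTop
      (𝓝 (∫ ω, φ (Y ω, W ω) ∂P)) := by
    simpa using (((tendsto_one_div_add_atTop_nhds_zero_nat (𝕜 := ℝ)).const_mul (K : ℝ)).const_mul
      2).const_add (∫ ω, φ (Y ω, W ω) ∂P)
  exact ge_of_tendsto' hlim key

lemma reverse_dir {d : ℕ} {Ω Ω' S : Type} [MeasurableSpace Ω] [MeasurableSpace Ω']
    [MeasurableSpace S] (P : Measure Ω) (P' : Measure Ω') [IsProbabilityMeasure P]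
    [IsProbabilityMeasure P'] (X Y : Ω → Euc d) (Z : Ω → S) (X' Y' : Ω' → Euc d) (Z' : Ω' → S)
    (hX : Measurable X) (hY : Measurable Y) (hZ : Measurable Z) (hYi : Integrable Y P)
    (hX' : Measurable X') (hY' : Measurable Y') (hZ' : Measurable Z')
    (h1 : P'.map (fun ω => (X' ω, Z' ω)) = P.map (fun ω => (X ω, Z ω)))
    (h2 : P'.map (fun ω => (Y' ω, Z' ω)) = P.map (fun ω => (Y ω, Z ω)))
    (h3 : X' =ᵐ[P'] P'[Y' | MeasurableSpace.comap (fun ω => (X' ω, Z' ω)) inferInstance]) :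
    CondCXLe P (MeasurableSpace.comap Z inferInstance) X Y := by
  intro φ hφ hφX hφY
  have hφc : Continuous φ := by
    rw [← continuousOn_univ]; exact hφ.continuousOn isOpen_univ
  have hm : MeasurableSpace.comap Z inferInstance ≤ (inferInstance : MeasurableSpace Ω) :=
    hZ.comap_le
  have hm' : MeasurableSpace.comap (fun ω => (X' ω, Z' ω)) inferInstance ≤
      (inferInstance : MeasurableSpace Ω') := (hX'.prodMk hZ').comap_le
  -- transfer
  have tr : ∀ (U : Ω → Euc d) (U' : Ω' → Euc d), Measurable U → Measurable U' →
      P'.map (fun ω => (U' ω, Z' ω)) = P.map (fun ω => (U ω, Z ω)) →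
      ∀ D, MeasurableSet D → ∫ ω in Z ⁻¹' D, φ (U ω) ∂P = ∫ ω in Z' ⁻¹' D, φ (U' ω) ∂P' := by
    intro U U' hU hU' h D hD
    have hfm : Measurable (fun q : Euc d × S => φ q.1) := hφc.measurable.comp measurable_fst
    have e1 : ∫ q in Prod.snd ⁻¹' D, φ q.1 ∂(P.map (fun ω => (U ω, Z ω))) =
        ∫ ω in Z ⁻¹' D, φ (U ω) ∂P := by
      rw [setIntegral_map (measurable_snd hD)
        hfm.aestronglyMeasurable (hU.prodMk hZ).aemeasurable]
      rfl
    have e2 : ∫ q in Prod.snd ⁻¹' D, φ q.1 ∂(P'.map (fun ω => (U' ω, Z' ω))) =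
        ∫ ω in Z' ⁻¹' D, φ (U' ω) ∂P' := by
      rw [setIntegral_map (measurable_snd hD)
        hfm.aestronglyMeasurable (hU'.prodMk hZ').aemeasurable]
      rfl
    rw [← e1, ← e2, h]
  have tri : ∀ (U : Ω → Euc d) (U' : Ω' → Euc d), Measurable U → Measurable U' →
      P'.map (fun ω => (U' ω, Z' ω)) = P.map (fun ω => (U ω, Z ω)) → P'.map U' = P.map U := by
    intro U U' hU hU' h
    have := congrArg (Measure.map Prod.fst) h
    rwa [Measure.map_map measurable_fst (hU.prodMk hZ),
      Measure.map_map measurable_fst (hU'.prodMk hZ')] at this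
  have hYm := tri Y Y' hY hY' h2
  have hXm := tri X X' hX hX' h1
  have hYi' : Integrable Y' P' := by
    have : Integrable (fun x => x) (P.map Y) :=
      (integrable_map_measure aestronglyMeasurable_id hY.aemeasurable).2 hYi
    rw [← hYm] at this
    exact this.comp_measurable hY'
  have hφY' : Integrable (fun ω => φ (Y' ω)) P' := by
    have : Integrable φ (P.map Y) :=
      (integrable_map_measure hφc.aestronglyMeasurable hY.aemeasurable).2 hφY
    rw [← hYm] at this
    exact this.comp_measurable hY'
  have hφX' : Integrable (fun ω => φ (X' ω)) P' := by
    have : Integrable φ (P.map X) :=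
      (integrable_map_measure hφc.aestronglyMeasurable hX.aemeasurable).2 hφX
    rw [← hXm] at this
    exact this.comp_measurable hX'
  have hJ := hφ.map_condExp_le_univ hm' (μ := P') hφc.lowerSemicontinuous hYi' hφY'
  have hmain : ∀ D, MeasurableSet D →
      ∫ ω in Z ⁻¹' D, φ (X ω) ∂P ≤ ∫ ω in Z ⁻¹' D, φ (Y ω) ∂P := by
    intro D hD
    rw [tr X X' hX hX' h1 D hD, tr Y Y' hY hY' h2 D hD]
    have hDm : MeasurableSet[MeasurableSpace.comap (fun ω => (X' ω, Z' ω)) inferInstance]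
        (Z' ⁻¹' D) := ⟨Prod.snd ⁻¹' D, measurable_snd hD, rfl⟩
    rw [← setIntegral_condExp hm' hφY' hDm]
    refine setIntegral_mono_ae hφX'.integrableOn integrable_condExp.integrableOn ?_
    filter_upwards [hJ, h3] with ω h4 h5
    rw [h5]; exact h4
  have htrim : P[(fun ω => φ (X ω)) | MeasurableSpace.comap Z inferInstance] ≤ᵐ[P.trim hm]
      P[(fun ω => φ (Y ω)) | MeasurableSpace.comap Z inferInstance] := by
    refine ae_le_of_forall_setIntegral_le
      (integrable_condExp.trim hm stronglyMeasurable_condExp)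
      (integrable_condExp.trim hm stronglyMeasurable_condExp) ?_
    rintro s ⟨D, hD, rfl⟩ -
    rw [← setIntegral_trim hm stronglyMeasurable_condExp ⟨D, hD, rfl⟩,
      ← setIntegral_trim hm stronglyMeasurable_condExp ⟨D, hD, rfl⟩,
      setIntegral_condExp hm hφX ⟨D, hD, rfl⟩, setIntegral_condExp hm hφY ⟨D, hD, rfl⟩]
    exact hmain D hD
  exact ae_le_of_ae_le_trim htrim
end

section
open scoped BoundedContinuousFunction Topology

lemma exists_pi {d : ℕ} {Ω : Type} [MeasurableSpace Ω] (P : Measure Ω) [IsProbabilityMeasure P]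
    (X Y : Ω → Euc d) (W : Ω → ℝ) (hX : Measurable X) (hY : Measurable Y) (hW : Measurable W)
    (hXi : Integrable X P) (hYi : Integrable Y P) (hW01 : ∀ ω, 0 ≤ W ω ∧ W ω ≤ 1)
    (H : ∀ φ : Euc d × ℝ → ℝ, ConvexOn ℝ Set.univ φ → ∀ K : NNReal, LipschitzWith K φ →
      ∫ ω, φ (X ω, W ω) ∂P ≤ ∫ ω, φ (Y ω, W ω) ∂P) :
    ∃ π : Measure ((Euc d × ℝ) × Euc d), IsProbabilityMeasure π ∧
      π.map Prod.fst = P.map (fun ω => (X ω, W ω)) ∧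
      π.map (fun p => (p.2, p.1.2)) = P.map (fun ω => (Y ω, W ω)) ∧
      ∀ (f : (Euc d × ℝ) →ᵇ ℝ) (l : Euc d →L[ℝ] ℝ),
        ∫ p, f p.1 * l p.2 ∂π = ∫ q, f q * l q.1 ∂(P.map (fun ω => (X ω, W ω))) := by
  have hXW : Measurable (fun ω => (X ω, W ω)) := hX.prodMk hW
  have hYW : Measurable (fun ω => (Y ω, W ω)) := hY.prodMk hW
  have hWi : Integrable W P := by
    refine Integrable.mono' (integrable_const (1 : ℝ)) hW.aestronglyMeasurable ?_
    exact Eventually.of_forall fun ω => by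
      rw [Real.norm_eq_abs, abs_of_nonneg (hW01 ω).1]; exact (hW01 ω).2
  have i1 : IsProbabilityMeasure (P.map (fun ω => (X ω, W ω))) :=
    Measure.isProbabilityMeasure_map hXW.aemeasurable
  have i2 : IsProbabilityMeasure (P.map (fun ω => (Y ω, W ω))) :=
    Measure.isProbabilityMeasure_map hYW.aemeasurable
  obtain ⟨π, hπ, hπ1, hπ2, hπ3⟩ := strassen (P.map (fun ω => (X ω, W ω)))
    (P.map (fun ω => (Y ω, W ω)))
    ((integrable_map_measure aestronglyMeasurable_id hXW.aemeasurable).2 (hXi.prodMk hWi))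
    ((integrable_map_measure aestronglyMeasurable_id hYW.aemeasurable).2 (hYi.prodMk hWi))
    (by
      rintro φ hφ ⟨K, hK⟩
      rw [integral_map hXW.aemeasurable hK.continuous.aestronglyMeasurable,
        integral_map hYW.aemeasurable hK.continuous.aestronglyMeasurable]
      exact H φ hφ K hK)
  -- the second coordinates agree
  have b1 : ∀ᵐ p ∂π, 0 ≤ p.1.2 ∧ p.1.2 ≤ 1 := by
    have h : ∀ᵐ q ∂(π.map Prod.fst), 0 ≤ q.2 ∧ q.2 ≤ 1 := by
      rw [hπ1, ae_map_iff hXW.aemeasurable]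
      · exact Eventually.of_forall hW01
      · exact (measurableSet_le measurable_const measurable_snd).inter
          (measurableSet_le measurable_snd measurable_const)
    exact ae_of_ae_map measurable_fst.aemeasurable h
  have b2 : ∀ᵐ p ∂π, 0 ≤ p.2.2 ∧ p.2.2 ≤ 1 := by
    have h : ∀ᵐ q ∂(π.map Prod.snd), 0 ≤ q.2 ∧ q.2 ≤ 1 := by
      rw [hπ2, ae_map_iff hYW.aemeasurable]
      · exact Eventually.of_forall hW01
      · exact (measurableSet_le measurable_const measurable_snd).inter
          (measurableSet_le measurable_snd measurable_const)
    exact ae_of_ae_map measurable_snd.aemeasurable h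
  have m1 : Measurable (fun p : (Euc d × ℝ) × (Euc d × ℝ) => p.1.2) :=
    measurable_snd.comp measurable_fst
  have m2 : Measurable (fun p : (Euc d × ℝ) × (Euc d × ℝ) => p.2.2) :=
    measurable_snd.comp measurable_snd
  have msq : Measurable (fun q : Euc d × ℝ => q.2 ^ 2) := measurable_snd.pow_const 2
  have s1 : ∫ p, p.1.2 ^ 2 ∂π = ∫ ω, W ω ^ 2 ∂P := by
    rw [← integral_map (φ := Prod.fst) (f := fun q : Euc d × ℝ => q.2 ^ 2)
      measurable_fst.aemeasurable msq.aestronglyMeasurable, hπ1,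
      integral_map hXW.aemeasurable msq.aestronglyMeasurable]
  have s2 : ∫ p, p.2.2 ^ 2 ∂π = ∫ ω, W ω ^ 2 ∂P := by
    rw [← integral_map (φ := Prod.snd) (f := fun q : Euc d × ℝ => q.2 ^ 2)
      measurable_snd.aemeasurable msq.aestronglyMeasurable, hπ2,
      integral_map hYW.aemeasurable msq.aestronglyMeasurable]
  have s3 : ∫ p, p.1.2 * p.2.2 ∂π = ∫ ω, W ω ^ 2 ∂P := by
    let f : (Euc d × ℝ) →ᵇ ℝ := BoundedContinuousFunction.ofNormedAddCommGroup
      (fun q => max 0 (min 1 q.2)) (by fun_prop) 1 (by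
        intro q
        rw [Real.norm_eq_abs, abs_of_nonneg (le_max_left _ _)]
        exact max_le zero_le_one (min_le_left _ _))
    have hf : ∀ q : Euc d × ℝ, 0 ≤ q.2 ∧ q.2 ≤ 1 → f q = q.2 := by
      intro q hq
      change max 0 (min 1 q.2) = q.2
      rw [min_eq_right hq.2, max_eq_right hq.1]
    have h := hπ3 f (ContinuousLinearMap.snd ℝ (Euc d) ℝ)
    have e1 : ∫ p, f p.1 * (ContinuousLinearMap.snd ℝ (Euc d) ℝ) p.2 ∂π =
        ∫ p, p.1.2 * p.2.2 ∂π := by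
      refine integral_congr_ae ?_
      filter_upwards [b1] with p hp
      rw [hf _ hp]; rfl
    have hc : Continuous fun q : Euc d × ℝ => f q * (ContinuousLinearMap.snd ℝ (Euc d) ℝ) q :=
      f.continuous.mul (ContinuousLinearMap.continuous _)
    rw [← e1, h, integral_map hXW.aemeasurable hc.aestronglyMeasurable]
    refine integral_congr_ae (Eventually.of_forall fun ω => ?_)
    change f (X ω, W ω) * W ω = W ω ^ 2
    rw [hf _ (hW01 ω), sq]
  have bdd : ∀ g : (Euc d × ℝ) × (Euc d × ℝ) → ℝ, Measurable g → (∀ᵐ p ∂π, |g p| ≤ 1) →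
      Integrable g π := fun g hg hb =>
    Integrable.mono' (integrable_const (1 : ℝ)) hg.aestronglyMeasurable hb
  have j1 : Integrable (fun p => p.1.2 ^ 2) π := bdd _ (m1.pow_const 2) (by
    filter_upwards [b1] with p hp
    rw [abs_le]; constructor <;> nlinarith)
  have j2 : Integrable (fun p => p.2.2 ^ 2) π := bdd _ (m2.pow_const 2) (by
    filter_upwards [b2] with p hp
    rw [abs_le]; constructor <;> nlinarith)
  have j3 : Integrable (fun p => p.1.2 * p.2.2) π := bdd _ (m1.mul m2) (by
    filter_upwards [b1, b2] with p hp hq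
    rw [abs_le]; constructor <;> nlinarith)
  have j12 : Integrable (fun p => p.1.2 ^ 2 + p.2.2 ^ 2) π := j1.add j2
  have hz : ∫ p, (p.1.2 - p.2.2) ^ 2 ∂π = 0 := by
    have e : (fun p : (Euc d × ℝ) × (Euc d × ℝ) => (p.1.2 - p.2.2) ^ 2) =
        fun p => (p.1.2 ^ 2 + p.2.2 ^ 2) - 2 * (p.1.2 * p.2.2) := by
      funext p; ring
    rw [e, integral_sub j12 (j3.const_mul 2), integral_add j1 j2, integral_const_mul,
      s1, s2, s3]
    ring
  have hww : ∀ᵐ p ∂π, p.1.2 = p.2.2 := by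
    have hi : Integrable (fun p : (Euc d × ℝ) × (Euc d × ℝ) => (p.1.2 - p.2.2) ^ 2) π := by
      have e : (fun p : (Euc d × ℝ) × (Euc d × ℝ) => (p.1.2 - p.2.2) ^ 2) =
        fun p => (p.1.2 ^ 2 + p.2.2 ^ 2) - 2 * (p.1.2 * p.2.2) := by
        funext p; ring
      rw [e]; exact j12.sub (j3.const_mul 2)
    have := (integral_eq_zero_iff_of_nonneg (fun p => sq_nonneg _) hi).1 hz
    filter_upwards [this] with p hp
    have : (p.1.2 - p.2.2) ^ 2 = 0 := hp
    have := pow_eq_zero_iff (two_ne_zero) |>.1 this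
    linarith
  let G : (Euc d × ℝ) × (Euc d × ℝ) → (Euc d × ℝ) × Euc d := fun p => (p.1, p.2.1)
  have hG : Measurable G := measurable_fst.prodMk (measurable_fst.comp measurable_snd)
  refine ⟨π.map G, Measure.isProbabilityMeasure_map hG.aemeasurable, ?_, ?_, ?_⟩
  · rw [Measure.map_map measurable_fst hG, ← hπ1]; rfl
  · rw [Measure.map_map (by fun_prop) hG, ← hπ2]
    refine Measure.map_congr ?_
    filter_upwards [hww] with p hp
    exact Prod.ext rfl hp
  · intro f l
    rw [integral_map hG.aemeasurable (by
      have : Continuous fun p : (Euc d × ℝ) × Euc d => f p.1 * l p.2 :=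
        (f.continuous.comp continuous_fst).mul (l.continuous.comp continuous_snd)
      exact this.aestronglyMeasurable)]
    exact hπ3 f (l.comp (ContinuousLinearMap.fst ℝ (Euc d) ℝ))
end

section
open scoped BoundedContinuousFunction Topology

lemma mean_kernel {d : ℕ} (π : Measure ((Euc d × ℝ) × Euc d)) [IsProbabilityMeasure π]
    (h1 : Integrable (fun p => p.1.1) π) (h2 : Integrable (fun p => p.2) π)
    (h3 : ∀ (f : (Euc d × ℝ) →ᵇ ℝ) (l : Euc d →L[ℝ] ℝ),
        ∫ p, f p.1 * l p.2 ∂π = ∫ q, f q * l q.1 ∂π.fst) :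
    ∀ᵐ q ∂π.fst, ∫ y, y ∂(π.condKernel q) = q.1 := by
  have hq1 : Integrable (fun q : Euc d × ℝ => q.1) π.fst :=
    (integrable_map_measure measurable_fst.aestronglyMeasurable measurable_fst.aemeasurable).2 h1
  have hm : Integrable (fun q => ∫ y, y ∂(π.condKernel q)) π.fst := h2.integral_condKernel
  refine ae_eq_of_integral_contDiff_smul_eq hm.locallyIntegrable hq1.locallyIntegrable ?_
  intro g hg hgs
  obtain ⟨C, hC⟩ := hgs.exists_bound_of_continuous hg.continuous
  let f : (Euc d × ℝ) →ᵇ ℝ := BoundedContinuousFunction.ofNormedAddCommGroup g hg.continuous C hC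
  have hgp : Integrable (fun p : (Euc d × ℝ) × Euc d => g p.1 • p.2) π :=
    h2.bdd_smul C (hg.continuous.comp continuous_fst).aestronglyMeasurable
      (Eventually.of_forall fun p => hC p.1)
  have hgq : Integrable (fun q : Euc d × ℝ => g q • q.1) π.fst :=
    hq1.bdd_smul C hg.continuous.aestronglyMeasurable (Eventually.of_forall fun p => hC p)
  have e : ∫ q, g q • ∫ y, y ∂(π.condKernel q) ∂π.fst = ∫ p, g p.1 • p.2 ∂π := by
    rw [← Measure.integral_condKernel hgp]
    refine integral_congr_ae (Eventually.of_forall fun q => ?_)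
    exact (integral_smul (g q) _).symm
  rw [e, SeparatingDual.eq_iff_forall_dual_eq (R := ℝ)]
  intro l
  rw [← l.integral_comp_comm hgp, ← l.integral_comp_comm hgq]
  simpa using! h3 f l

lemma meas_H {S E : Type*} [MeasurableSpace S] [MeasurableSpace E] (κ : S → Measure E)
    (hκ : Measurable κ) (hp : ∀ z, IsProbabilityMeasure (κ z)) (W : S → ℝ) (hW : Measurable W)
    (h : E × ℝ → ENNReal) (hh : Measurable h) :
    Measurable (fun z => ∫⁻ x, h (x, W z) ∂(κ z)) := by
  let k : Kernel S E := ⟨κ, hκ⟩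
  have : IsMarkovKernel k := ⟨hp⟩
  have hf : Measurable (fun q : S × E => h (q.2, W q.1)) :=
    hh.comp (measurable_snd.prodMk (hW.comp measurable_fst))
  exact Measurable.lintegral_kernel_prod_right' (κ := k) hf

lemma yz_law {Ω S E : Type*} [MeasurableSpace Ω] [mS : MeasurableSpace S] [MeasurableSpace E]
    (P : Measure Ω) [IsProbabilityMeasure P] (X Y : Ω → E) (Z : Ω → S)
    (hX : Measurable X) (hY : Measurable Y) (hZ : Measurable Z)
    (κX κY : Kernel S E) [IsMarkovKernel κX] [IsMarkovKernel κY]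
    (hκX : P.map Z ⊗ₘ κX = P.map (fun ω => (Z ω, X ω)))
    (hκY : P.map Z ⊗ₘ κY = P.map (fun ω => (Z ω, Y ω)))
    (W : S → ℝ) (hW : Measurable W)
    (hXW : Measurable[MeasurableSpace.comap W inferInstance] (fun z => κX z))
    (hYW : Measurable[MeasurableSpace.comap W inferInstance] (fun z => κY z))
    (η : Kernel (E × ℝ) E) (B : Set E) (hB : MeasurableSet B)
    (hη : ∀ D : Set ℝ, MeasurableSet D →
      ∫⁻ ω in Z ⁻¹' (W ⁻¹' D), η (X ω, W (Z ω)) B ∂P = P (Y ⁻¹' B ∩ Z ⁻¹' (W ⁻¹' D)))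
    (D : Set S) (hD : MeasurableSet D) :
    ∫⁻ ω in Z ⁻¹' D, η (X ω, W (Z ω)) B ∂P = P (Y ⁻¹' B ∩ Z ⁻¹' D) := by
  have hηB : Measurable (fun q => η q B) := η.measurable_coe hB
  have hPZ : IsProbabilityMeasure (P.map Z) := Measure.isProbabilityMeasure_map hZ.aemeasurable
  have I1 : ∀ D : Set S, MeasurableSet D → ∫⁻ ω in Z ⁻¹' D, η (X ω, W (Z ω)) B ∂P =
      ∫⁻ z in D, ∫⁻ x, η (x, W z) B ∂(κX z) ∂(P.map Z) := by
    intro D hD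
    have hf : Measurable (fun q : S × E => η (q.2, W q.1) B) :=
      hηB.comp (measurable_snd.prodMk (hW.comp measurable_fst))
    have := Measure.setLIntegral_compProd (μ := P.map Z) (κ := κX) hf hD MeasurableSet.univ
    simp only [Measure.restrict_univ] at this
    rw [← this, hκX, setLIntegral_map (hD.prod MeasurableSet.univ) hf (hZ.prodMk hX)]
    congr 2
    ext ω; simp
  have I2 : ∀ D : Set S, MeasurableSet D → P (Y ⁻¹' B ∩ Z ⁻¹' D) =
      ∫⁻ z in D, κY z B ∂(P.map Z) := by
    intro D hD
    rw [← Measure.compProd_apply_prod hD hB, hκY, Measure.map_apply (hZ.prodMk hY) (hD.prod hB)]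
    congr 1
    ext ω; simp [and_comm]
  have hm : MeasurableSpace.comap W inferInstance ≤ mS := hW.comap_le
  have a1 : Measurable[MeasurableSpace.comap W inferInstance]
      (fun z => ∫⁻ x, η (x, W z) B ∂(κX z)) :=
    @meas_H S E (MeasurableSpace.comap W inferInstance) _ (fun z => κX z) hXW
      (fun z => inferInstance) W (comap_measurable W) (fun q => η q B) hηB
  have a2 : Measurable[MeasurableSpace.comap W inferInstance] (fun z => κY z B) :=
    (Measure.measurable_coe hB).comp hYW
  have hae : (fun z => ∫⁻ x, η (x, W z) B ∂(κX z)) =ᵐ[P.map Z] fun z => κY z B := by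
    refine ae_eq_of_ae_eq_trim (hm := hm) ?_
    refine ae_eq_of_forall_setLIntegral_eq_of_sigmaFinite a1 a2 ?_
    rintro _ ⟨D, hD, rfl⟩ -
    rw [setLIntegral_trim hm a1 ⟨D, hD, rfl⟩, setLIntegral_trim hm a2 ⟨D, hD, rfl⟩,
      ← I1 _ (hW hD), ← I2 _ (hW hD), hη D hD]
  rw [I1 D hD, I2 D hD]
  exact lintegral_congr_ae (ae_restrict_of_ae hae)

lemma forward_dir {d : ℕ} {Ω S : Type} [MeasurableSpace Ω] (P : Measure Ω)
    [IsProbabilityMeasure P] [MeasurableSpace S] (X Y : Ω → Euc d) (Z : Ω → S)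
    (hX : Measurable X) (hY : Measurable Y) (hZ : Measurable Z)
    (hXi : Integrable X P) (hYi : Integrable Y P)
    (H : CondCXLe P (MeasurableSpace.comap Z inferInstance) X Y) :
      ∃ (Ω' : Type) (_ : MeasurableSpace Ω') (P' : Measure Ω'),
        IsProbabilityMeasure P' ∧
        ∃ (X' Y' : Ω' → Euc d) (Z' : Ω' → S),
          Measurable X' ∧ Measurable Y' ∧ Measurable Z' ∧
          P'.map (fun ω => (X' ω, Z' ω)) = P.map (fun ω => (X ω, Z ω)) ∧
          P'.map (fun ω => (Y' ω, Z' ω)) = P.map (fun ω => (Y ω, Z ω)) ∧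
          X' =ᵐ[P'] P'[Y' | MeasurableSpace.comap (fun ω => (X' ω, Z' ω)) inferInstance] := by
  obtain ⟨W, hW, hW01, hκ1, hκ2⟩ := exists_W (condDistrib X Z P) (condDistrib Y Z P)
  have hWZ : Measurable (fun ω => W (Z ω)) := hW.comp hZ
  have hXW : Measurable (fun ω => (X ω, W (Z ω))) := hX.prodMk hWZ
  have hXZ : Measurable (fun ω => (X ω, Z ω)) := hX.prodMk hZ
  have hYZ : Measurable (fun ω => (Y ω, Z ω)) := hY.prodMk hZ
  have hYW : Measurable (fun ω => (Y ω, W (Z ω))) := hY.prodMk hWZ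
  obtain ⟨π, hπ, hπ1, hπ2, hπ3⟩ := exists_pi P X Y (fun ω => W (Z ω)) hX hY hWZ hXi hYi
    (fun ω => hW01 _) (fun φ hφ K hK => cond_order _ P hZ.comap_le X Y hXi hYi _
      (hW.comp (comap_measurable Z)) (fun ω => hW01 _) H φ hφ K hK)
  have hπf : π.fst = P.map (fun ω => (X ω, W (Z ω))) := hπ1
  have mswap : Measurable (fun p : (Euc d × ℝ) × Euc d => (p.2, p.1.2)) := by fun_prop
  have i1 : Integrable (fun p => p.1.1) π := by
    have : Integrable (fun q : Euc d × ℝ => q.1) (π.map Prod.fst) := by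
      rw [hπ1]
      exact (integrable_map_measure measurable_fst.aestronglyMeasurable hXW.aemeasurable).2 hXi
    exact this.comp_measurable measurable_fst
  have i2 : Integrable (fun p => p.2) π := by
    have : Integrable (fun q : Euc d × ℝ => q.1) (π.map (fun p => (p.2, p.1.2))) := by
      rw [hπ2]
      exact (integrable_map_measure measurable_fst.aestronglyMeasurable hYW.aemeasurable).2 hYi
    exact this.comp_measurable mswap
  have hmean := mean_kernel π i1 i2 (by rw [hπf]; exact hπ3)
  rw [hπf] at hmean
  have hdis : P.map (fun ω => (X ω, W (Z ω))) ⊗ₘ π.condKernel = π := by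
    rw [← hπf]; exact π.disintegrate π.condKernel
  have mG : Measurable (fun q : Euc d × S => (q.1, W q.2)) := by fun_prop
  let η : Kernel (Euc d × S) (Euc d) := π.condKernel.comap _ mG
  have hηM : IsMarkovKernel η := by infer_instance
  have ip : IsProbabilityMeasure (P.map (fun ω => (X ω, Z ω))) :=
    Measure.isProbabilityMeasure_map hXZ.aemeasurable
  let P' : Measure ((Euc d × S) × Euc d) := P.map (fun ω => (X ω, Z ω)) ⊗ₘ η
  have hP' : IsProbabilityMeasure P' := by infer_instance
  have hfst : P'.map Prod.fst = P.map (fun ω => (X ω, Z ω)) := Measure.fst_compProd _ _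
  have myz : Measurable (fun p : (Euc d × S) × Euc d => (p.2, p.1.2)) := by fun_prop
  have hYZlaw : P'.map (fun p => (p.2, p.1.2)) = P.map (fun ω => (Y ω, Z ω)) := by
    have ip2 : IsProbabilityMeasure (P'.map (fun p => (p.2, p.1.2))) :=
      Measure.isProbabilityMeasure_map myz.aemeasurable
    refine Measure.ext_prod fun {B D} hB hD => ?_
    rw [Measure.map_apply myz (hB.prod hD), Measure.map_apply hYZ (hB.prod hD)]
    have e1 : (fun p : (Euc d × S) × Euc d => (p.2, p.1.2)) ⁻¹' (B ×ˢ D) =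
        (Prod.snd ⁻¹' D) ×ˢ B := by
      ext p; simp [and_comm]
    have e2 : (fun ω => (Y ω, Z ω)) ⁻¹' (B ×ˢ D) = Y ⁻¹' B ∩ Z ⁻¹' D := rfl
    have hηB : Measurable (fun q => η q B) := η.measurable_coe hB
    have hηB0 : Measurable (fun q => π.condKernel q B) := π.condKernel.measurable_coe hB
    rw [e1, e2, Measure.compProd_apply_prod (measurable_snd hD) hB,
      setLIntegral_map (measurable_snd hD) hηB hXZ]
    refine yz_law P X Y Z hX hY hZ (condDistrib X Z P) (condDistrib Y Z P)
      (compProd_map_condDistrib hX.aemeasurable) (compProd_map_condDistrib hY.aemeasurable)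
      W hW hκ1 hκ2 π.condKernel B hB ?_ D hD
    intro D' hD'
    have e3 : P (Y ⁻¹' B ∩ Z ⁻¹' (W ⁻¹' D')) = π ((Prod.snd ⁻¹' D') ×ˢ B) := by
      have : P.map (fun ω => (Y ω, W (Z ω))) (B ×ˢ D') = P (Y ⁻¹' B ∩ Z ⁻¹' (W ⁻¹' D')) :=
        Measure.map_apply hYW (hB.prod hD')
      rw [← this, ← hπ2, Measure.map_apply mswap (hB.prod hD')]
      congr 1
      ext p; simp [and_comm]
    have e4 : π ((Prod.snd ⁻¹' D') ×ˢ B) =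
        ∫⁻ q in Prod.snd ⁻¹' D', π.condKernel q B ∂(P.map (fun ω => (X ω, W (Z ω)))) := by
      conv_lhs => rw [← hdis]
      exact Measure.compProd_apply_prod (measurable_snd hD') hB
    rw [e3, e4, setLIntegral_map (measurable_snd hD') hηB0 hXW]
    rfl
  have hYi' : Integrable (fun p : (Euc d × S) × Euc d => p.2) P' := by
    have : Integrable (fun q : Euc d × S => q.1) (P'.map (fun p => (p.2, p.1.2))) := by
      rw [hYZlaw]
      exact (integrable_map_measure measurable_fst.aestronglyMeasurable hYZ.aemeasurable).2 hYi
    exact this.comp_measurable myz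
  refine ⟨(Euc d × S) × Euc d, inferInstance, P', hP', fun p => p.1.1, fun p => p.2,
    fun p => p.1.2, by fun_prop, by fun_prop, by fun_prop, hfst, hYZlaw, ?_⟩
  have c1 : P'[(fun p : (Euc d × S) × Euc d => p.2) |
      MeasurableSpace.comap (Prod.fst : (Euc d × S) × Euc d → Euc d × S) inferInstance] =ᵐ[P'] _ :=
    condExp_ae_eq_integral_condDistrib' measurable_fst hYi'
  have c2 : condDistrib (fun p : (Euc d × S) × Euc d => p.2) Prod.fst P' =ᵐ[P'.map Prod.fst] η := by
    refine condDistrib_ae_eq_of_measure_eq_compProd _ measurable_snd.aemeasurable ?_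
    rw [hfst]
    exact Measure.map_id
  have c3 := ae_of_ae_map measurable_fst.aemeasurable c2
  have c4 : ∀ᵐ p ∂P', ∫ y, y ∂(η p.1) = p.1.1 := by
    have h1 : ∀ᵐ ω ∂P, ∫ y, y ∂(π.condKernel (X ω, W (Z ω))) = X ω :=
      ae_of_ae_map hXW.aemeasurable hmean
    have h2 : ∀ᵐ q ∂(P'.map Prod.fst), ∫ y, y ∂(η q) = q.1 := by
      rw [hfst, ae_map_iff hXZ.aemeasurable]
      · exact h1
      · exact measurableSet_eq_fun
          (StronglyMeasurable.integral_kernel stronglyMeasurable_id).measurable measurable_fst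
    exact ae_of_ae_map measurable_fst.aemeasurable h2
  filter_upwards [c1, c3, c4] with p h1 h2 h3
  refine Eq.trans ?_ h1.symm
  rw [h2, h3]
end

/-- Conditional Strassen theorem (convex order): X | Z ≤cx Y | Z iff there is a
Z-conditional coupling (X̂, Ŷ, Ẑ) with X̂ = E(Ŷ | σ(X̂, Ẑ)) a.s. -/
theorem conditional_strassen_cx
    (d : ℕ) (hd : 1 ≤ d) {Ω : Type} [MeasurableSpace Ω] (P : Measure Ω)
    [IsProbabilityMeasure P] {S : Type} [MeasurableSpace S]
    (X Y : Ω → Euc d) (Z : Ω → S)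
    (hX : Measurable X) (hY : Measurable Y) (hZ : Measurable Z)
    (hXi : Integrable X P) (hYi : Integrable Y P) :
    CondCXLe P (MeasurableSpace.comap Z inferInstance) X Y ↔
      ∃ (Ω' : Type) (_ : MeasurableSpace Ω') (P' : Measure Ω'),
        IsProbabilityMeasure P' ∧
        ∃ (X' Y' : Ω' → Euc d) (Z' : Ω' → S),
          Measurable X' ∧ Measurable Y' ∧ Measurable Z' ∧
          P'.map (fun ω => (X' ω, Z' ω)) = P.map (fun ω => (X ω, Z ω)) ∧
          P'.map (fun ω => (Y' ω, Z' ω)) = P.map (fun ω => (Y ω, Z ω)) ∧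
          X' =ᵐ[P'] P'[Y' | MeasurableSpace.comap (fun ω => (X' ω, Z' ω)) inferInstance] := by
  constructor
  · exact forward_dir P X Y Z hX hY hZ hXi hYi
  · rintro ⟨Ω', mΩ', P', hP', X', Y', Z', hX', hY', hZ', h1, h2, h3⟩
    exact reverse_dir P P' X Y Z X' Y' Z' hX hY hZ hYi hX' hY' hZ' h1 h2 h3
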